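/- arXiv:2502.11640 — 3 statements merged into one kernel-verified Lean document; each statement's English description precedes it below -/
import Mathlib

section
/- Let α > 1, let V be a reflexive real Banach space such that both V and V* are uniformly convex, and let A : V → Set V* be a maximal-monotone multivalued operator. Let x ∈ V with A(x) ≠ ∅. Then: (a) A(x) contains a unique element A^0(x) of minimal V*-norm; and (b) for any assignment λ ↦ x_λ of solutions of the resolvent equation 0 ∈ J(x_λ − x) + λ A(x_λ), the generalized Yosida approximations A_λ(x) := λ^{-1} j(x − x_λ) converge strongly in V* to A^0(x) as λ → 0⁺. -/
open NormedSpace Filter Topology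

/-- The generalized duality mapping with exponent `α` on a real normed space `V`:
`J(u) = {v ∈ V* | ⟨v,u⟩ = ‖u‖^α = ‖v‖^{α/(α-1)}}`. -/
def genJ (α : ℝ) (V : Type*) [NormedAddCommGroup V] [NormedSpace ℝ V] (u : V) :
    Set (StrongDual ℝ V) :=
  {v : StrongDual ℝ V | v u = ‖u‖ ^ α ∧ ‖v‖ ^ (α / (α - 1)) = ‖u‖ ^ α}

/-- A multivalued operator `A : V → Set V*` is monotone if
`⟨v₁ - v₂, u₁ - u₂⟩ ≥ 0` for all `v₁ ∈ A u₁`, `v₂ ∈ A u₂`. -/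
def MonotoneOp {V : Type*} [NormedAddCommGroup V] [NormedSpace ℝ V]
    (A : V → Set (StrongDual ℝ V)) : Prop :=
  ∀ u₁ u₂ : V, ∀ v₁ ∈ A u₁, ∀ v₂ ∈ A u₂, 0 ≤ (v₁ - v₂) (u₁ - u₂)

/-- A monotone multivalued operator is maximal monotone if its graph is not properly
contained in the graph of any other monotone operator. -/
def MaximalMonotoneOp {V : Type*} [NormedAddCommGroup V] [NormedSpace ℝ V]
    (A : V → Set (StrongDual ℝ V)) : Prop :=
  MonotoneOp A ∧
    ∀ B : V → Set (StrongDual ℝ V), MonotoneOp B → (∀ u, A u ⊆ B u) → ∀ u, B u = A u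


theorem aux_mem_of {V : Type*} [NormedAddCommGroup V] [NormedSpace ℝ V]
    {A : V → Set (StrongDual ℝ V)} (hA : MaximalMonotoneOp A) {x : V} {y : StrongDual ℝ V}
    (h : ∀ u, ∀ w ∈ A u, 0 ≤ (y - w) (x - u)) : y ∈ A x := by
  have hB := hA.2 (fun u => {v | v ∈ A u ∨ (u = x ∧ v = y)}) ?_ (fun u v hv => Or.inl hv) x
  · rw [← hB]
    exact Or.inr ⟨rfl, rfl⟩
  · rintro u₁ u₂ v₁ (h1 | ⟨rfl, rfl⟩) v₂ (h2 | ⟨rfl, rfl⟩)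
    · exact hA.1 u₁ u₂ v₁ h1 v₂ h2
    · have := h u₁ v₁ h1
      simp only [ContinuousLinearMap.sub_apply, map_sub] at this ⊢
      linarith
    · exact h u₂ v₂ h2
    · simp

theorem aux_limit {V : Type*} [NormedAddCommGroup V] [NormedSpace ℝ V]
    {A : V → Set (StrongDual ℝ V)} (hA : MaximalMonotoneOp A) {x : V}
    {ι : Type*} (U : Ultrafilter ι) (y : ι → StrongDual ℝ V) (xs : ι → V) (r : ι → ℝ) (R : ℝ)
    (hy : ∀ᶠ i in (U : Filter ι), y i ∈ A (xs i)) (hx : Tendsto xs U (𝓝 x))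
    (hr : ∀ᶠ i in (U : Filter ι), ‖y i‖ ≤ r i) (hR : Tendsto r U (𝓝 R)) :
    ∃ y0 ∈ A x, ‖y0‖ ≤ R ∧ ∀ w, Tendsto (fun i => y i w) U (𝓝 (y0 w)) := by
  have hbd : ∀ᶠ i in (U : Filter ι), ‖y i‖ ≤ R + 1 := by
    filter_upwards [hr, hR.eventually (gt_mem_nhds (lt_add_one R))] with i h1 h2
    exact h1.trans h2.le
  have hc : IsCompact (WeakDual.toStrongDual ⁻¹' Metric.closedBall (0 : StrongDual ℝ V) (R + 1)) :=
    WeakDual.isCompact_closedBall 0 (R + 1)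
  obtain ⟨z, -, hz⟩ := hc.ultrafilter_le_nhds (U.map fun i => StrongDual.toWeakDual (y i)) (by
    rw [Filter.le_principal_iff]
    show ∀ᶠ i in (U : Filter ι), _
    filter_upwards [hbd] with i hi
    simpa using hi)
  have hw : ∀ w, Tendsto (fun i => y i w) U (𝓝 (WeakDual.toStrongDual z w)) := fun w =>
    ((WeakDual.eval_continuous w).tendsto z).comp (show Tendsto _ (U : Filter ι) (𝓝 z) from hz)
  have hR0 : 0 ≤ R := by
    refine ge_of_tendsto hR ?_
    filter_upwards [hr] with i hi using (norm_nonneg _).trans hi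
  refine ⟨WeakDual.toStrongDual z, ?_, ?_, hw⟩
  · apply aux_mem_of hA
    intro u w hwu
    have h0 : Tendsto (fun i => y i (xs i - x)) U (𝓝 0) := by
      rw [tendsto_iff_norm_sub_tendsto_zero] at hx
      apply squeeze_zero_norm' (a := fun i => (R + 1) * ‖xs i - x‖)
      · filter_upwards [hbd] with i hi
        exact ((y i).le_opNorm _).trans (by gcongr)
      · simpa using hx.const_mul (R + 1)
    have h1 : Tendsto (fun i => w (xs i - u)) U (𝓝 (w (x - u))) :=
      (w.continuous.tendsto _).comp (hx.sub_const u)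
    have h2 := ((hw (x - u)).add h0).sub h1
    have h3 := ge_of_tendsto (b := 0) h2 (by
      filter_upwards [hy] with i hi
      have := hA.1 _ _ _ hi _ hwu
      simp only [ContinuousLinearMap.sub_apply, map_sub] at this ⊢
      linarith)
    simp only [ContinuousLinearMap.sub_apply]
    linarith
  · refine ContinuousLinearMap.opNorm_le_bound _ hR0 fun w => ?_
    refine le_of_tendsto_of_tendsto (hw w).norm (hR.mul_const ‖w‖) ?_
    filter_upwards [hr] with i hi
    exact ((y i).le_opNorm _).trans (by gcongr)

theorem aux_unique {V : Type*} [NormedAddCommGroup V] [NormedSpace ℝ V]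
    [UniformConvexSpace (StrongDual ℝ V)]
    {A : V → Set (StrongDual ℝ V)} (hA : MaximalMonotoneOp A) {x : V} {v v' : StrongDual ℝ V}
    (hv : v ∈ A x) (hm : ∀ z ∈ A x, ‖v‖ ≤ ‖z‖) (hv' : v' ∈ A x) (hle : ‖v'‖ ≤ ‖v‖) :
    v' = v := by
  have hmid : (2⁻¹ : ℝ) • (v' + v) ∈ A x := by
    apply aux_mem_of hA
    intro u w hw
    have h1 := hA.1 _ _ _ hv _ hw
    have h2 := hA.1 _ _ _ hv' _ hw
    simp only [ContinuousLinearMap.sub_apply, ContinuousLinearMap.smul_apply,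
      ContinuousLinearMap.add_apply, smul_eq_mul] at *
    linarith
  have h := hm _ hmid
  have he : ‖v'‖ = ‖v‖ := le_antisymm hle (hm _ hv')
  rw [norm_smul] at h
  norm_num at h
  have h4 : ‖v' + v‖ = ‖v'‖ + ‖v‖ := le_antisymm (norm_add_le _ _) (by linarith)
  exact eq_of_norm_eq_of_norm_add_eq he h4

theorem aux_exists {V : Type*} [NormedAddCommGroup V] [NormedSpace ℝ V]
    {A : V → Set (StrongDual ℝ V)} (hA : MaximalMonotoneOp A) {x : V} (hne : (A x).Nonempty) :
    ∃ v ∈ A x, ∀ z ∈ A x, ‖v‖ ≤ ‖z‖ := by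
  set m := sInf (norm '' A x) with hmdef
  have hbb : BddBelow (norm '' A x) := ⟨0, by rintro _ ⟨z, -, rfl⟩; exact norm_nonneg z⟩
  have hs : ∀ n : ℕ, ∃ z ∈ A x, ‖z‖ ≤ m + 1 / ((n : ℝ) + 1) := by
    intro n
    obtain ⟨_, ⟨z, hz, rfl⟩, hlt⟩ := exists_lt_of_csInf_lt (hne.image norm)
      (show sInf (norm '' A x) < m + 1 / ((n : ℝ) + 1) by
        have : 0 < 1 / ((n : ℝ) + 1) := by positivity
        linarith)
    exact ⟨z, hz, hlt.le⟩
  choose z hz hzn using hs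
  have hU : ((hyperfilter ℕ : Ultrafilter ℕ) : Filter ℕ) ≤ atTop := by
    rw [← Nat.cofinite_eq_atTop]; exact hyperfilter_le_cofinite
  obtain ⟨y, hy, hyn, -⟩ := aux_limit hA (x := x) (hyperfilter ℕ) z (fun _ => x)
    (fun n => m + 1 / ((n : ℝ) + 1)) m (Eventually.of_forall hz) tendsto_const_nhds
    (Eventually.of_forall hzn) (by
      have := (tendsto_one_div_add_atTop_nhds_zero_nat (𝕜 := ℝ)).const_add m
      rw [add_zero] at this
      exact this.mono_left hU)
  exact ⟨y, hy, fun w hw => hyn.trans (csInf_le hbb ⟨w, hw, rfl⟩)⟩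

theorem aux_norm {α : ℝ} (hα : 1 < α) {V : Type*} [NormedAddCommGroup V]
    [NormedSpace ℝ V] {u : V} {v : StrongDual ℝ V} (hv : v ∈ genJ α V u) :
    ‖v‖ = ‖u‖ ^ (α - 1) := by
  have h := congrArg (fun t : ℝ => t ^ ((α - 1) / α)) hv.2
  have h1 : α - 1 ≠ 0 := by linarith
  have h2 : α ≠ 0 := by linarith
  simp only [← Real.rpow_mul (norm_nonneg _)] at h
  rwa [show α / (α - 1) * ((α - 1) / α) = 1 by field_simp, Real.rpow_one,
    show α * ((α - 1) / α) = α - 1 by field_simp] at h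

theorem aux_single {α : ℝ} (hα : 1 < α) {V : Type*} [NormedAddCommGroup V]
    [NormedSpace ℝ V] [UniformConvexSpace (StrongDual ℝ V)] {u : V} {v w : StrongDual ℝ V}
    (hv : v ∈ genJ α V u) (hw : w ∈ genJ α V u) : v = w := by
  have hv' := aux_norm hα hv
  have hw' := aux_norm hα hw
  rcases eq_or_ne u 0 with rfl | hu
  · rw [norm_zero, Real.zero_rpow (by linarith)] at hv' hw'
    rw [norm_eq_zero.1 hv', norm_eq_zero.1 hw']
  · have hu' : 0 < ‖u‖ := norm_pos_iff.2 hu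
    refine eq_of_norm_eq_of_norm_add_eq (hv'.trans hw'.symm) (le_antisymm (norm_add_le _ _) ?_)
    have h := (le_abs_self _).trans ((v + w).le_opNorm u)
    rw [ContinuousLinearMap.add_apply, hv.1, hw.1,
      show ‖u‖ ^ α = ‖u‖ ^ (α - 1) * ‖u‖ by
        rw [← Real.rpow_add_one hu'.ne']; congr 1; ring, ← add_mul] at h
    rw [hv', hw']
    exact le_of_mul_le_mul_right h hu'

theorem aux_odd {α : ℝ} {V : Type*} [NormedAddCommGroup V]
    [NormedSpace ℝ V] {u : V} {v : StrongDual ℝ V} (hv : v ∈ genJ α V u) :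
    -v ∈ genJ α V (-u) := by
  refine ⟨?_, ?_⟩
  · simpa using hv.1
  · simpa using hv.2

/-- (a) a maximal monotone operator on a reflexive Banach space with
uniformly convex space and dual admits a unique minimal section at each point of
its domain; (b) the generalized Yosida approximations converge strongly in the
dual to the minimal section as the parameter tends to zero from the right. -/
theorem statement11 (α : ℝ) (hα : 1 < α) (V : Type*) [NormedAddCommGroup V]
    [NormedSpace ℝ V] [CompleteSpace V] [UniformConvexSpace V]
    [UniformConvexSpace (StrongDual ℝ V)]
    (hrefl : Function.Surjective (inclusionInDoubleDual ℝ V))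
    (j : V → StrongDual ℝ V) (hj : ∀ u : V, j u ∈ genJ α V u)
    (A : V → Set (StrongDual ℝ V)) (hA : MaximalMonotoneOp A)
    (x : V) (hAx : (A x).Nonempty) :
    (∃! v : StrongDual ℝ V, v ∈ A x ∧ ∀ z ∈ A x, ‖v‖ ≤ ‖z‖) ∧
      (∀ v : StrongDual ℝ V, (v ∈ A x ∧ ∀ z ∈ A x, ‖v‖ ≤ ‖z‖) →
        ∀ xsel : ℝ → V,
          (∀ lam : ℝ, 0 < lam → (-lam⁻¹) • j (xsel lam - x) ∈ A (xsel lam)) →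
          Tendsto (fun lam : ℝ => lam⁻¹ • j (x - xsel lam))
            (𝓝[>] (0 : ℝ)) (𝓝 v)) := by
  obtain ⟨v0, hv0, hm0⟩ := aux_exists hA hAx
  refine ⟨⟨v0, ⟨hv0, hm0⟩, fun w hw => aux_unique hA hv0 hm0 hw.1 (hw.2 _ hv0)⟩, ?_⟩
  rintro v ⟨hv, hm⟩ xsel hsel
  have hmem : ∀ l : ℝ, 0 < l → l⁻¹ • j (x - xsel l) ∈ A (xsel l) := by
    intro l hl
    have h := hsel l hl
    have h1 : j (x - xsel l) = - j (xsel l - x) :=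
      aux_single hα (hj _) (by simpa using aux_odd (hj (xsel l - x)))
    rw [h1, smul_neg, ← neg_smul]
    exact h
  have hα1 : 0 < α - 1 := by linarith
  have hbound : ∀ l : ℝ, 0 < l → ‖x - xsel l‖ ^ (α - 1) ≤ l * ‖v‖ := by
    intro l hl
    set u := x - xsel l with hu
    rcases eq_or_ne u 0 with h0 | h0
    · rw [h0, norm_zero, Real.zero_rpow hα1.ne']
      positivity
    have hu' : 0 < ‖u‖ := norm_pos_iff.2 h0
    have h1 := hA.1 _ _ _ hv _ (hmem l hl)
    rw [← hu, ContinuousLinearMap.sub_apply, ContinuousLinearMap.smul_apply, (hj u).1,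
      smul_eq_mul, show ‖u‖ ^ α = ‖u‖ ^ (α - 1) * ‖u‖ by
        rw [← Real.rpow_add_one hu'.ne']; congr 1; ring] at h1
    have h2 := (le_abs_self _).trans (v.le_opNorm u)
    have h3 : l⁻¹ * ‖u‖ ^ (α - 1) ≤ ‖v‖ := by
      refine le_of_mul_le_mul_right ?_ hu'
      linarith
    rwa [inv_mul_le_iff₀ hl] at h3
  have hnorm : ∀ l : ℝ, 0 < l → ‖l⁻¹ • j (x - xsel l)‖ ≤ ‖v‖ := by
    intro l hl
    rw [norm_smul, aux_norm hα (hj _), Real.norm_of_nonneg (inv_nonneg.2 hl.le),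
      inv_mul_le_iff₀ hl]
    exact hbound l hl
  have hpos : ∀ᶠ l : ℝ in 𝓝[>] (0 : ℝ), 0 < l := self_mem_nhdsWithin
  have hxs : Tendsto xsel (𝓝[>] (0 : ℝ)) (𝓝 x) := by
    rw [tendsto_iff_norm_sub_tendsto_zero]
    have hl : Tendsto (fun l : ℝ => (l * ‖v‖) ^ (α - 1)⁻¹) (𝓝[>] (0 : ℝ)) (𝓝 0) := by
      have h1 : Tendsto (fun l : ℝ => l * ‖v‖) (𝓝[>] (0 : ℝ)) (𝓝 0) := by
        have : Tendsto (fun l : ℝ => l * ‖v‖) (𝓝 (0 : ℝ)) (𝓝 (0 * ‖v‖)) :=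
          tendsto_id.mul_const _
        rw [zero_mul] at this
        exact this.mono_left nhdsWithin_le_nhds
      have h2 := h1.rpow_const (p := (α - 1)⁻¹) (Or.inr (inv_nonneg.2 hα1.le))
      rwa [Real.zero_rpow (inv_ne_zero hα1.ne')] at h2
    refine squeeze_zero' (Eventually.of_forall fun _ => norm_nonneg _) ?_ hl
    filter_upwards [hpos] with l hl
    have h := Real.rpow_le_rpow (by positivity) (hbound l hl) (inv_nonneg.2 hα1.le)
    rwa [Real.rpow_rpow_inv (norm_nonneg _) hα1.ne', norm_sub_rev] at h
  rw [tendsto_iff_ultrafilter]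
  intro U hU
  have hposU := hU hpos
  obtain ⟨y0, hy0, hy0n, hlim⟩ := aux_limit hA U (fun l => l⁻¹ • j (x - xsel l)) xsel
    (fun _ => ‖v‖) ‖v‖
    (by filter_upwards [hposU] with l hl using hmem l hl) (hxs.mono_left hU)
    (by filter_upwards [hposU] with l hl using hnorm l hl) tendsto_const_nhds
  obtain rfl : y0 = v := aux_unique hA hv hm hy0 hy0n
  rw [Metric.tendsto_nhds]
  intro ε hε
  obtain ⟨δ, hδ, hconv⟩ :=
    exists_forall_closed_ball_dist_add_le_two_mul_sub (StrongDual ℝ V) hε ‖y0‖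
  by_contra hcon
  rw [← Ultrafilter.eventually_not] at hcon
  have hle : ∀ᶠ l in (U : Filter ℝ), ‖l⁻¹ • j (x - xsel l) + y0‖ ≤ 2 * ‖y0‖ - δ := by
    filter_upwards [hcon, hposU] with l h1 h2
    rw [not_lt, dist_eq_norm] at h1
    exact hconv (hnorm l h2) le_rfl h1
  have hnn : 0 ≤ 2 * ‖y0‖ - δ := by
    obtain ⟨l, hl⟩ := hle.exists
    exact (norm_nonneg _).trans hl
  have h2 : ‖y0 + y0‖ ≤ 2 * ‖y0‖ - δ := by
    refine ContinuousLinearMap.opNorm_le_bound _ hnn fun w => ?_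
    refine le_of_tendsto ((hlim w).add_const (y0 w)).norm ?_
    filter_upwards [hle] with l hl
    exact (ContinuousLinearMap.le_opNorm (l⁻¹ • j (x - xsel l) + y0) w).trans (by gcongr)
  rw [← two_smul ℝ y0, norm_smul] at h2
  norm_num at h2
  linarith
end

section
/- Let α > 1 and let V be a reflexive real Banach space such that both V and V* are strictly convex, and let A : V → Set V* be a monotone multivalued operator. If there exists λ > 0 such that the range of A + λJ is all of V* — i.e., for every y ∈ V* there exist x ∈ V, w ∈ A(x) and z ∈ J(x) with λ z + w = y — then A is maximal monotone. -/
open NormedSpace Filter Topology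

theorem genJ_norm {α : ℝ} (hα : 1 < α) {V : Type*} [NormedAddCommGroup V]
    [NormedSpace ℝ V] {u : V} {z : StrongDual ℝ V} (hz : z ∈ genJ α V u) :
    ‖z‖ = ‖u‖ ^ (α - 1) ∧ z u = ‖u‖ ^ (α - 1) * ‖u‖ := by
  have h1 : 0 < α - 1 := by linarith
  have hq : α / (α - 1) ≠ 0 := by positivity
  have e : ‖u‖ ^ α = (‖u‖ ^ (α - 1)) ^ (α / (α - 1)) := by
    rw [← Real.rpow_mul (norm_nonneg _)]
    congr 1
    field_simp
  have e2 : ‖u‖ ^ α = ‖u‖ ^ (α - 1) * ‖u‖ := by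
    rcases eq_or_ne ‖u‖ 0 with h | h
    · rw [h, mul_zero, Real.zero_rpow (by linarith)]
    · rw [Real.rpow_sub_one h]
      field_simp
  obtain ⟨ha, hb⟩ := hz
  refine ⟨?_, ha.trans e2⟩
  rw [e] at hb
  exact (Real.rpow_left_inj (norm_nonneg _) (by positivity) hq).1 hb

theorem genJ_nonempty {α : ℝ} (hα : 1 < α) {V : Type*} [NormedAddCommGroup V]
    [NormedSpace ℝ V] (u : V) : ∃ z, z ∈ genJ α V u := by
  have h1 : 0 < α - 1 := by linarith
  have hq : α / (α - 1) ≠ 0 := by positivity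
  have hα0 : α ≠ 0 := by linarith
  rcases eq_or_ne u 0 with h | h
  · refine ⟨0, ?_, ?_⟩
    · simp [h, Real.zero_rpow hα0]
    · simp [h, Real.zero_rpow hα0, Real.zero_rpow hq]
  · obtain ⟨g, hg, hgu⟩ := exists_dual_vector ℝ u (norm_ne_zero_iff.2 h)
    have hn : ‖u‖ ≠ 0 := norm_ne_zero_iff.2 h
    refine ⟨‖u‖ ^ (α - 1) • g, ?_, ?_⟩
    · have : g u = ‖u‖ := by simpa using hgu
      rw [ContinuousLinearMap.smul_apply, this, smul_eq_mul, Real.rpow_sub_one hn]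
      field_simp
    · rw [norm_smul, hg, mul_one, Real.norm_of_nonneg (by positivity),
        ← Real.rpow_mul (norm_nonneg _)]
      congr 1
      field_simp

theorem genJ_strict {α : ℝ} (hα : 1 < α) {V : Type*} [NormedAddCommGroup V]
    [NormedSpace ℝ V] [StrictConvexSpace ℝ V] [StrictConvexSpace ℝ (StrongDual ℝ V)]
    {x u : V} {z j : StrongDual ℝ V} (hz : z ∈ genJ α V x) (hj : j ∈ genJ α V u)
    (h : 0 ≤ (z - j) (u - x)) : x = u ∧ z = j := by
  obtain ⟨nz, zx⟩ := genJ_norm hα hz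
  obtain ⟨nj, ju⟩ := genJ_norm hα hj
  have h1 : 0 < α - 1 := by linarith
  have b1 : z u ≤ ‖z‖ * ‖u‖ := (le_abs_self _).trans (z.le_opNorm u)
  have b2 : j x ≤ ‖j‖ * ‖x‖ := (le_abs_self _).trans (j.le_opNorm x)
  simp only [ContinuousLinearMap.sub_apply, map_sub] at h
  rw [nz] at b1
  rw [nj] at b2
  have hn : ‖x‖ = ‖u‖ := by
    rcases lt_trichotomy ‖x‖ ‖u‖ with hl | hl | hl
    · have := Real.rpow_lt_rpow (norm_nonneg _) hl h1
      nlinarith [mul_pos (sub_pos.2 this) (sub_pos.2 hl)]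
    · exact hl
    · have := Real.rpow_lt_rpow (norm_nonneg _) hl h1
      nlinarith [mul_pos (sub_pos.2 this) (sub_pos.2 hl)]
  rw [hn] at nz zx b1 b2
  have zu : z u = ‖u‖ ^ (α - 1) * ‖u‖ := by linarith
  have jx : j x = ‖u‖ ^ (α - 1) * ‖u‖ := by linarith
  rcases eq_or_ne ‖u‖ 0 with h0 | h0
  · have hu : u = 0 := norm_eq_zero.1 h0
    have hx : x = 0 := norm_eq_zero.1 (hn.trans h0)
    rw [h0, Real.zero_rpow h1.ne', norm_eq_zero] at nz nj
    exact ⟨hx.trans hu.symm, nz.trans nj.symm⟩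
  · have hp : 0 < ‖u‖ := lt_of_le_of_ne (norm_nonneg _) h0.symm
    have hs : 0 < ‖u‖ ^ (α - 1) := Real.rpow_pos_of_pos hp _
    constructor
    · refine eq_of_norm_eq_of_norm_add_eq hn (le_antisymm (norm_add_le _ _) ?_)
      have : z (x + u) ≤ ‖z‖ * ‖x + u‖ := (le_abs_self _).trans (z.le_opNorm _)
      rw [map_add, zx, zu, nz] at this
      rw [hn]
      refine le_of_mul_le_mul_left ?_ hs
      linarith
    · refine eq_of_norm_eq_of_norm_add_eq (nz.trans nj.symm) (le_antisymm (norm_add_le _ _) ?_)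
      have : (z + j) u ≤ ‖z + j‖ * ‖u‖ := (le_abs_self _).trans ((z + j).le_opNorm _)
      rw [ContinuousLinearMap.add_apply, zu, ju] at this
      rw [nz, nj]
      refine le_of_mul_le_mul_right ?_ hp
      linarith

/-- on a reflexive Banach space with strictly convex space and dual,
a monotone operator satisfying the range condition `R(A + λJ) = V*` for some
`λ > 0` is maximal monotone. -/
theorem statement13 (α : ℝ) (hα : 1 < α) (V : Type*) [NormedAddCommGroup V]
    [NormedSpace ℝ V] [CompleteSpace V] [StrictConvexSpace ℝ V]
    [StrictConvexSpace ℝ (StrongDual ℝ V)]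
    (hrefl : Function.Surjective (inclusionInDoubleDual ℝ V))
    (A : V → Set (StrongDual ℝ V)) (hA : MonotoneOp A)
    (hrange : ∃ lam > (0 : ℝ), ∀ y : StrongDual ℝ V,
      ∃ x : V, ∃ w ∈ A x, ∃ z ∈ genJ α V x, lam • z + w = y) :
    MaximalMonotoneOp A := by
  obtain ⟨lam, hl, hr⟩ := hrange
  refine ⟨hA, fun B hB hAB u => Set.Subset.antisymm (fun v hv => ?_) (hAB u)⟩
  obtain ⟨j, hj⟩ := genJ_nonempty hα u
  obtain ⟨x, w, hw, z, hz, e⟩ := hr (lam • j + v)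
  have hm := hB u x v hv w (hAB x hw)
  have e2 : v - w = lam • (z - j) := by
    rw [smul_sub, sub_eq_sub_iff_add_eq_add, add_comm v, e]
  rw [e2, ContinuousLinearMap.smul_apply, smul_eq_mul] at hm
  obtain ⟨hxu, hzj⟩ := genJ_strict hα hz hj (nonneg_of_mul_nonneg_right hm hl)
  subst hxu hzj
  rw [← add_left_cancel e]
  exact hw
end

section
/- Let α > 1 and let V be a reflexive real Banach space such that both V and V* are strictly convex, and let A : V → Set V* be a maximal-monotone multivalued operator. Then for every λ > 0 the range of A + λJ is all of V*: for every y ∈ V* there exist x ∈ V, w ∈ A(x) and z ∈ J(x) such that λ z + w = y. -/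
open NormedSpace Filter Topology

lemma aux_young_attained {a b : ℝ} (h : a.HolderConjugate b) (s : ℝ) (hs : 0 ≤ s) :
    ∃ t : ℝ, 0 ≤ t ∧ t * s - t ^ a / a = s ^ b / b := by
  refine ⟨s ^ (b / a), Real.rpow_nonneg hs _, ?_⟩
  have h1 : (s ^ (b / a)) ^ a = s ^ b := by
    rw [← Real.rpow_mul hs, div_mul_cancel₀ _ h.ne_zero]
  have h2 := (Real.young_inequality_eq_iff_of_nonneg (Real.rpow_nonneg hs (b / a)) hs h).2 h1
  rw [h2]; ring

lemma aux_convex_norm {W : Type*} [NormedAddCommGroup W] [NormedSpace ℝ W] (a : ℝ) (ha : 1 < a) :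
    ConvexOn ℝ Set.univ (fun w : W => ‖w‖ ^ a / a) := by
  have h : ConvexOn ℝ Set.univ (fun w : W => ‖w‖ ^ a) := by
    refine ⟨convex_univ, fun x _ y _ s t hs ht hst => ?_⟩
    calc ‖s • x + t • y‖ ^ a ≤ (s • ‖x‖ + t • ‖y‖) ^ a := by
          apply Real.rpow_le_rpow (norm_nonneg _) _ (by linarith)
          exact (convexOn_norm convex_univ).2 (Set.mem_univ x) (Set.mem_univ y) hs ht hst
      _ ≤ _ := (convexOn_rpow ha.le).2 (norm_nonneg x) (norm_nonneg y) hs ht hst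
  have := h.smul (c := a⁻¹) (by positivity)
  refine this.congr ?_
  intro x _
  simp [div_eq_inv_mul]

lemma aux_core {α β : ℝ} (h : α.HolderConjugate β) {V : Type*} [NormedAddCommGroup V]
    [NormedSpace ℝ V]
    (hrefl : Function.Surjective (inclusionInDoubleDual ℝ V))
    (G : Set (V × StrongDual ℝ V))
    (hmono : ∀ c ∈ G, ∀ d ∈ G, 0 ≤ (c.2 - d.2) (c.1 - d.1))
    (hmax : ∀ d : V × StrongDual ℝ V, (∀ c ∈ G, 0 ≤ (c.2 - d.2) (c.1 - d.1)) → d ∈ G) :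
    ∃ d ∈ G, d.2 d.1 = - ‖d.1‖ ^ α ∧ ‖d.2‖ ^ β = ‖d.1‖ ^ α := by
  have hpos := h.pos
  have hpos' := h.symm.pos
  have young : ∀ (x : V) (v : StrongDual ℝ V), -(v x) ≤ ‖x‖ * ‖v‖ ∧
      ‖x‖ * ‖v‖ ≤ ‖x‖ ^ α / α + ‖v‖ ^ β / β := by
    intro x v
    refine ⟨?_, Real.young_inequality_of_nonneg (norm_nonneg _) (norm_nonneg _) h⟩
    have h1 := v.le_opNorm x
    rw [Real.norm_eq_abs] at h1
    have h2 := neg_abs_le (v x)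
    linarith
  obtain ⟨c₀, hc₀⟩ : G.Nonempty := by
    by_contra hne
    rw [Set.not_nonempty_iff_eq_empty] at hne
    have := hmax 0 (by simp [hne])
    simp [hne] at this
  let g : V × StrongDual ℝ V → ℝ := fun e => ‖e.1‖ ^ α / α + ‖e.2‖ ^ β / β
  let S : Set ((V × StrongDual ℝ V) × ℝ) := {p | p.2 < - g p.1}
  let T : Set ((V × StrongDual ℝ V) × ℝ) :=
    {p | ∀ c ∈ G, c.2 p.1.1 + p.1.2 c.1 - c.2 c.1 ≤ p.2}
  have hg : ConvexOn ℝ Set.univ g := by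
    have h1 := (aux_convex_norm (W := V) α h.lt).comp_linearMap
      (LinearMap.fst ℝ V (StrongDual ℝ V))
    have h2 := (aux_convex_norm (W := StrongDual ℝ V) β h.symm.lt).comp_linearMap
      (LinearMap.snd ℝ V (StrongDual ℝ V))
    exact h1.add h2
  have hgc : Continuous g := by
    have h1 : Continuous fun e : V × StrongDual ℝ V => ‖e.1‖ ^ α :=
      (continuous_norm.comp continuous_fst).rpow_const (fun _ => Or.inr hpos.le)
    have h2 : Continuous fun e : V × StrongDual ℝ V => ‖e.2‖ ^ β :=
      (continuous_norm.comp continuous_snd).rpow_const (fun _ => Or.inr hpos'.le)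
    exact (h1.div_const _).add (h2.div_const _)
  have hS : Convex ℝ S := by
    have := hg.neg.convex_strict_hypograph
    simpa [S] using this
  have hSo : IsOpen S := isOpen_lt continuous_snd ((hgc.comp continuous_fst).neg)
  have hT : Convex ℝ T := by
    intro p hp q hq s t hs ht hst c hc
    have h1 := mul_le_mul_of_nonneg_left (hp c hc) hs
    have h2 := mul_le_mul_of_nonneg_left (hq c hc) ht
    have h3 : c.2 c.1 = s * c.2 c.1 + t * c.2 c.1 := by rw [← add_mul, hst, one_mul]
    simp
    rw [h3]
    linarith
  have hGT : ∀ c ∈ G, ((c, c.2 c.1) : (V × StrongDual ℝ V) × ℝ) ∈ T := by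
    intro c hc d hd
    have := hmono c hc d hd
    simp at this ⊢
    linarith
  have hdisj : Disjoint S T := by
    rw [Set.disjoint_left]
    rintro ⟨⟨x, v⟩, r⟩ hp hq
    have h1 := young x v
    have hp' : r < -(‖x‖ ^ α / α + ‖v‖ ^ β / β) := hp
    have h2 : r < v x := by linarith
    have h3 : (x, v) ∈ G := by
      apply hmax
      intro c hc
      have := hq c hc
      simp at this ⊢
      linarith
    have := hq _ h3
    simp at this
    linarith
  obtain ⟨Φ, u, hΦS, hΦT⟩ := geometric_hahn_banach_open hS hSo hT hdisj
  have hdec : ∀ (x : V) (v : StrongDual ℝ V) (r : ℝ),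
      Φ ((x, v), r) = Φ ((x, 0), 0) + Φ ((0, v), 0) + r * Φ ((0, 0), 1) := by
    intro x v r
    have e : (((x, v), r) : (V × StrongDual ℝ V) × ℝ)
        = ((x, 0), 0) + ((0, v), 0) + r • ((0, 0), 1) := by simp
    rw [e, map_add, map_add, map_smul, smul_eq_mul]
  set k := Φ ((0, 0), 1) with hk
  have hkpos : 0 < k := by
    have hu := hΦT _ (hGT c₀ hc₀)
    have hs := hΦS (c₀, min (- g c₀) (c₀.2 c₀.1) - 1) (by
      show min (- g c₀) (c₀.2 c₀.1) - 1 < - g c₀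
      have := min_le_left (- g c₀) (c₀.2 c₀.1)
      linarith)
    have e1 := hdec c₀.1 c₀.2 (c₀.2 c₀.1)
    have e2 := hdec c₀.1 c₀.2 (min (- g c₀) (c₀.2 c₀.1) - 1)
    simp only [Prod.mk.eta] at e1 e2
    rw [e1] at hu
    rw [e2] at hs
    have h3 := min_le_right (- g c₀) (c₀.2 c₀.1)
    by_contra hneg
    push Not at hneg
    nlinarith
  let q₀ : StrongDual ℝ V := Φ.comp ((ContinuousLinearMap.inl ℝ _ ℝ).comp
    (ContinuousLinearMap.inl ℝ V (StrongDual ℝ V)))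
  let ψ₀ : StrongDual ℝ (StrongDual ℝ V) := Φ.comp ((ContinuousLinearMap.inl ℝ _ ℝ).comp
    (ContinuousLinearMap.inr ℝ V (StrongDual ℝ V)))
  obtain ⟨p, hp⟩ := hrefl (-k⁻¹ • ψ₀)
  let q : StrongDual ℝ V := -k⁻¹ • q₀
  have hq : ∀ x, Φ ((x, 0), 0) = - k * q x := by
    intro x
    have : q x = -k⁻¹ * Φ ((x, 0), 0) := by simp [q, q₀]
    rw [this]; field_simp
  have hp' : ∀ v : StrongDual ℝ V, Φ ((0, v), 0) = - k * v p := by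
    intro v
    have : v p = -k⁻¹ * Φ ((0, v), 0) := by
      rw [← dual_def ℝ V p v, hp]; simp [ψ₀]
    rw [this]; field_simp
  set m := u / k with hm
  have hu : u = k * m := by rw [hm]; field_simp
  have H1 : ∀ c ∈ G, q c.1 + c.2 p + m ≤ c.2 c.1 := by
    intro c hc
    have h1 := hΦT _ (hGT c hc)
    have e1 := hdec c.1 c.2 (c.2 c.1)
    simp only [Prod.mk.eta] at e1
    rw [e1, hq, hp', hu] at h1
    have : k * m ≤ k * (c.2 c.1 - q c.1 - c.2 p) := by linarith
    have := le_of_mul_le_mul_left this hkpos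
    linarith
  have H2 : ∀ (x : V) (v : StrongDual ℝ V),
      -(‖x‖ ^ α / α + ‖v‖ ^ β / β) ≤ q x + v p + m := by
    intro x v
    by_contra hlt
    push Not at hlt
    have h1 := hΦS ((x, v), q x + v p + m) hlt
    rw [hdec, hq, hp', hu] at h1
    linarith
  have H3 : ‖q‖ ^ β / β + ‖p‖ ^ α / α ≤ m := by
    obtain ⟨t, ht, hteq⟩ := aux_young_attained h ‖q‖ (norm_nonneg _)
    obtain ⟨s, hs, hseq⟩ := aux_young_attained h.symm ‖p‖ (norm_nonneg _)
    obtain ⟨e', he1, he2⟩ := exists_dual_vector'' ℝ q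
    obtain ⟨w, hw1, hw2⟩ := exists_dual_vector'' ℝ p
    obtain ⟨e, rfl⟩ := hrefl e'
    have he1' : ‖e‖ ≤ 1 := by
      have : ‖inclusionInDoubleDual ℝ V e‖ = ‖e‖ :=
        (inclusionInDoubleDualLi (𝕜 := ℝ) (E := V)).norm_map e
      rw [← this]; exact he1
    rw [dual_def] at he2
    simp at he2 hw2
    have h1 := H2 (-(t • e)) (-(s • w))
    have n1 : ‖-(t • e)‖ ^ α ≤ t ^ α := by
      apply Real.rpow_le_rpow (norm_nonneg _) _ hpos.le
      rw [norm_neg, norm_smul, Real.norm_of_nonneg ht]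
      nlinarith
    have n2 : ‖-(s • w)‖ ^ β ≤ s ^ β := by
      apply Real.rpow_le_rpow (norm_nonneg _) _ hpos'.le
      rw [norm_neg, norm_smul, Real.norm_of_nonneg hs]
      nlinarith
    have n1' := div_le_div_of_nonneg_right n1 hpos.le
    have n2' := div_le_div_of_nonneg_right n2 hpos'.le
    have r1 : q (-(t • e)) = - (t * ‖q‖) := by simp [he2]
    have r2 : (-(s • w)) p = - (s * ‖p‖) := by simp [hw2]
    rw [r1, r2] at h1
    linarith
  obtain ⟨y1, y2⟩ := young p q
  have hmem : (p, q) ∈ G := by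
    apply hmax
    intro c hc
    have := H1 c hc
    simp
    linarith
  have H4 := H1 _ hmem
  simp only at H4
  have heq := (Real.young_inequality_eq_iff_of_nonneg (norm_nonneg p) (norm_nonneg q) h).1
    (by linarith)
  refine ⟨(p, q), hmem, ?_, heq.symm⟩
  have hsum : ‖p‖ ^ α / α + ‖q‖ ^ β / β = ‖p‖ ^ α := by
    rw [← heq, div_eq_mul_inv, div_eq_mul_inv, ← mul_add, h.inv_add_inv_eq_one, mul_one]
  simp only
  linarith

/-- on a reflexive Banach space with strictly convex space and dual,
a maximal monotone operator satisfies the range condition `R(A + λJ) = V*` for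
every `λ > 0`. -/
theorem statement14 (α : ℝ) (hα : 1 < α) (V : Type*) [NormedAddCommGroup V]
    [NormedSpace ℝ V] [CompleteSpace V] [StrictConvexSpace ℝ V]
    [StrictConvexSpace ℝ (StrongDual ℝ V)]
    (hrefl : Function.Surjective (inclusionInDoubleDual ℝ V))
    (A : V → Set (StrongDual ℝ V)) (hA : MaximalMonotoneOp A)
    (lam : ℝ) (hlam : 0 < lam) :
    ∀ y : StrongDual ℝ V, ∃ x : V, ∃ w ∈ A x, ∃ z ∈ genJ α V x, lam • z + w = y := by
  intro y
  have h : α.HolderConjugate (α / (α - 1)) := Real.HolderConjugate.conjExponent hα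
  obtain ⟨⟨p, q⟩, hG, h1, h2⟩ := aux_core h hrefl
    {c : V × StrongDual ℝ V | lam • c.2 + y ∈ A c.1} (by
      intro c hc d hd
      have := hA.1 _ _ _ hc _ hd
      have e : (lam • c.2 + y - (lam • d.2 + y)) (c.1 - d.1)
          = lam * (c.2 - d.2) (c.1 - d.1) := by
        simp; ring
      rw [e] at this
      exact nonneg_of_mul_nonneg_right this hlam) (by
      intro d hd
      have key : ∀ a, ∀ w ∈ A a, 0 ≤ (w - (lam • d.2 + y)) (a - d.1) := by
        intro a w hw
        have e : lam • (lam⁻¹ • (w - y)) + y = w := by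
          rw [smul_smul, mul_inv_cancel₀ hlam.ne', one_smul, sub_add_cancel]
        have h3 := hd (a, lam⁻¹ • (w - y)) (by
          show lam • (lam⁻¹ • (w - y)) + y ∈ A a
          rw [e]; exact hw)
        have h4 : w - (lam • d.2 + y) = lam • (lam⁻¹ • (w - y) - d.2) := by
          rw [smul_sub, smul_smul, mul_inv_cancel₀ hlam.ne', one_smul]; abel
        rw [h4]
        exact mul_nonneg hlam.le h3
      have hB := hA.2 (fun a => A a ∪ {w | a = d.1 ∧ w = lam • d.2 + y}) (by
        rintro a b v (hv | ⟨rfl, rfl⟩) w (hw | ⟨rfl, rfl⟩)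
        · exact hA.1 _ _ _ hv _ hw
        · exact key _ _ hv
        · have := key _ _ hw
          simp at this ⊢
          linarith
        · simp) (fun a => Set.subset_union_left) d.1
      show lam • d.2 + y ∈ A d.1
      rw [← hB]
      exact Or.inr ⟨rfl, rfl⟩)
  refine ⟨p, lam • q + y, hG, -q, ⟨?_, ?_⟩, ?_⟩
  · simpa using congrArg Neg.neg h1
  · rw [norm_neg]; exact h2
  · rw [smul_neg]; abel
end
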